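/- arXiv:1410.6944 — 2 statements merged into one kernel-verified Lean document; each statement's English description precedes it below -/
import Mathlib

section
/- Let A be a Hopf *-algebra over ℂ, α : A → A an admissible bijection with α-twisted antipode S_α = S∘α, L : A → ℂ an S_α-invariant generating functional, and η : A → D a cocycle (for a *-representation π on a complex inner product space D) which yields the coboundary of L. Then for every a ∈ A with Δ(a) = ∑_{i∈s} xᵢ ⊗ yᵢ (a finite sum): L(a + α(a)) = −∑_{i∈s} ⟨η((S_α(xᵢ))*), η(α(yᵢ))⟩ = −∑_{i∈s} ⟨η((α(xᵢ))*), η(S_α(yᵢ))⟩. -/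
/-! Writing `S` for the antipode and `b = α a`, comultiplicativity of `α` gives
`Δ b = ∑ α xᵢ ⊗ α yᵢ`, so both `∑ S (α xᵢ) * α yᵢ` and `∑ α xᵢ * S (α yᵢ)` equal `ε(b) 1`, which
`L` kills. Expanding `L` of each product by the coboundary identity leaves the sum of inner products
plus two counit terms; by `ε ∘ S = ε`, `L ∘ S_α = L` and the counit laws these terms are `L a` and
`L (α a)`. The one extra ingredient is `ε ∘ α = ε` (`counit_admissible`): an injective
comultiplicative map automatically preserves the counit. -/

open scoped TensorProduct ComplexConjugate ComplexOrder InnerProductSpace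
open Coalgebra

universe u

variable {A : Type u} [Ring A] [HopfAlgebra ℂ A] [StarRing A] [StarModule ℂ A]

/-- The star-compatibility axioms making a Hopf algebra over `ℂ` into a Hopf `*`-algebra:
`Δ(a*) = (*⊗*)(Δ a)` (expressed in Sweedler form), `ε(a*) = conj (ε a)`,
and `S(S(a*)*) = a`.  (The properties `(ab)* = b*a*`, `1* = 1`, involutivity and
conjugate-linearity of `*` are encoded by `StarRing A` and `StarModule ℂ A`.) -/
def IsHopfStar (A : Type u) [Ring A] [HopfAlgebra ℂ A] [StarRing A] [StarModule ℂ A] : Prop :=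
  (∀ (a : A) (ι : Type u) (s : Finset ι) (x y : ι → A),
      comul (R := ℂ) a = ∑ i ∈ s, x i ⊗ₜ[ℂ] y i →
      comul (R := ℂ) (star a) = ∑ i ∈ s, star (x i) ⊗ₜ[ℂ] star (y i)) ∧
  (∀ a : A, counit (R := ℂ) (star a) = conj (counit (R := ℂ) a)) ∧
  (∀ a : A, HopfAlgebra.antipode (R := ℂ)
      (star (HopfAlgebra.antipode (R := ℂ) (star a))) = a)

/-- `α : A → A` is an admissible bijection: (i) a unital algebra homomorphism
(`ℂ`-linearity is part of the data `α : A →ₗ[ℂ] A`); (ii) `α((α(a*))*) = a`;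
(iii) `(α⊗α)∘Δ = Δ∘α`; (iv) `id + α` is bijective; (v) `id⊗id + α⊗α` is bijective. -/
structure IsAdmissible (α : A →ₗ[ℂ] A) : Prop where
  map_one : α 1 = 1
  map_mul : ∀ a b : A, α (a * b) = α a * α b
  star_cond : ∀ a : A, α (star (α (star a))) = a
  comul_comp : ∀ a : A,
    TensorProduct.map α α (comul (R := ℂ) a) = comul (R := ℂ) (α a)
  bij_add : Function.Bijective ((LinearMap.id + α : A →ₗ[ℂ] A))
  bij_tensor :
    Function.Bijective ((LinearMap.id + TensorProduct.map α α : A ⊗[ℂ] A →ₗ[ℂ] A ⊗[ℂ] A))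

/-- The `α`-twisted antipode `S_α = S ∘ α`. -/
def twistedAntipode (α : A →ₗ[ℂ] A) : A →ₗ[ℂ] A :=
  HopfAlgebra.antipode (R := ℂ) ∘ₗ α

variable {D : Type u} [NormedAddCommGroup D] [InnerProductSpace ℂ D]

/-- A `*`-representation of `A` on the complex inner product space `D`:
a unital algebra homomorphism into the linear endomorphisms of `D` such that
`⟨π(a*)ξ, ζ⟩ = ⟨ξ, π(a)ζ⟩`. -/
def IsStarRep (π : A →ₐ[ℂ] Module.End ℂ D) : Prop :=
  ∀ (a : A) (ξ ζ : D), ⟪π (star a) ξ, ζ⟫_ℂ = ⟪ξ, π a ζ⟫_ℂ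

/-- A cocycle for the representation `π`: `η(ab) = π(a)η(b) + ε(b)·η(a)`. -/
def IsCocycle (π : A →ₐ[ℂ] Module.End ℂ D) (η : A →ₗ[ℂ] D) : Prop :=
  ∀ a b : A, η (a * b) = π a (η b) + counit (R := ℂ) b • η a

/-- A generating functional on `A`: a linear functional with `L(1) = 0`,
`L(a*) = conj (L a)`, and `L(a*a)` a nonnegative real for `a ∈ ker ε`. -/
structure IsGenFunctional (L : A →ₗ[ℂ] ℂ) : Prop where
  map_one : L 1 = 0
  hermitian : ∀ a : A, L (star a) = conj (L a)
  cond_pos : ∀ a : A, counit (R := ℂ) a = 0 → 0 ≤ L (star a * a)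

/-- `η` yields the coboundary of `L`:
`L(ab) = ε(a)L(b) + L(a)ε(b) + ⟨η(a*), η(b)⟩`. -/
def YieldsCoboundary (η : A →ₗ[ℂ] D) (L : A →ₗ[ℂ] ℂ) : Prop :=
  ∀ a b : A, L (a * b) =
    counit (R := ℂ) a * L b + L a * counit (R := ℂ) b + ⟪η (star a), η b⟫_ℂ

/-- `η` is `α`-real: `⟨η(a), η(b)⟩ = ⟨η((S_α b)*), η(S_α(a*))⟩`. -/
def IsAlphaReal (α : A →ₗ[ℂ] A) (η : A →ₗ[ℂ] D) : Prop :=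
  ∀ a b : A, ⟪η a, η b⟫_ℂ =
    ⟪η (star (twistedAntipode α b)), η (twistedAntipode α (star a))⟫_ℂ

/-- The right counit law in Sweedler form. -/
lemma sum_counit_smul_left {ι : Type*} {a : A} (r : Repr ℂ a ι) :
    ∑ i ∈ r.index, counit (R := ℂ) (r.right i) • r.left i = a := by
  have h := congrArg (TensorProduct.rid ℂ A) (sum_tmul_counit_eq r)
  simpa only [map_sum, TensorProduct.rid_tmul, one_smul] using h

/-- The image of a Sweedler decomposition of `a` is one of `α a`. -/
def admissibleRepr {α : A →ₗ[ℂ] A} (hα : IsAdmissible α) {ι : Type*} {a : A} (r : Repr ℂ a ι) :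
    Repr ℂ (α a) ι where
  index := r.index
  left i := α (r.left i)
  right i := α (r.right i)
  eq := by
    rw [← hα.comul_comp, ← r.eq, map_sum]
    simp only [TensorProduct.map_tmul]

/-- Since `star ∘ α ∘ star` is a left inverse of `α`, the map `α` is injective. -/
lemma admissible_injective {α : A →ₗ[ℂ] A} (hα : IsAdmissible α) : Function.Injective α := by
  intro a b hab
  have ha := hα.star_cond (star a)
  have hb := hα.star_cond (star b)
  rw [star_star] at ha hb
  exact star_injective (by rw [← ha, ← hb, hab])

/-- Injectivity of `α` turns the right counit law for `α a` into `∑ ε(α a₂) a₁ = a`; applying `ε`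
and the left counit law for `a` gives `ε(α a) = ε(a)`. -/
lemma counit_admissible {α : A →ₗ[ℂ] A} (hα : IsAdmissible α) (a : A) :
    counit (R := ℂ) (α a) = counit (R := ℂ) a := by
  let r := Repr.arbitrary ℂ a
  have h1 : ∑ i ∈ r.index, counit (R := ℂ) (α (r.right i)) • r.left i = a := by
    apply admissible_injective hα
    rw [map_sum]
    simp only [map_smul]
    exact sum_counit_smul_left (admissibleRepr hα r)
  have h2 := congrArg (fun z => counit (R := ℂ) (α z)) (sum_counit_smul r)
  have h3 := congrArg (fun z => counit (R := ℂ) z) h1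
  simp only [map_sum, map_smul, smul_eq_mul] at h2 h3
  rw [← h2, ← h3]
  exact Finset.sum_congr rfl fun i _ => mul_comm _ _

/-- If `η` yields the coboundary of an `S_α`-invariant generating functional `L`,
then for `Δ(a) = ∑ᵢ xᵢ ⊗ yᵢ` one has
`L(a + α(a)) = −∑ᵢ ⟨η((S_α(xᵢ))*), η(α(yᵢ))⟩ = −∑ᵢ ⟨η((α(xᵢ))*), η(S_α(yᵢ))⟩`. -/
theorem invariant_genFunctional_formula (hA : IsHopfStar A)
    (α : A →ₗ[ℂ] A) (hα : IsAdmissible α)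
    (π : A →ₐ[ℂ] Module.End ℂ D) (η : A →ₗ[ℂ] D)
    (hπ : IsStarRep π) (hη : IsCocycle π η)
    (L : A →ₗ[ℂ] ℂ) (hL : IsGenFunctional L)
    (hinv : ∀ a : A, L (twistedAntipode α a) = L a)
    (hcob : YieldsCoboundary η L) :
    ∀ (a : A) (ι : Type u) (s : Finset ι) (x y : ι → A),
      comul (R := ℂ) a = ∑ i ∈ s, x i ⊗ₜ[ℂ] y i →
      (L (a + α a) =
        -∑ i ∈ s, ⟪η (star (twistedAntipode α (x i))), η (α (y i))⟫_ℂ) ∧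
      (L (a + α a) =
        -∑ i ∈ s, ⟪η (star (α (x i))), η (twistedAntipode α (y i))⟫_ℂ) := by
  intro a ι s x y hxy
  let r : Repr ℂ a ι := ⟨s, x, y, hxy.symm⟩
  have hSε : ∀ c, counit (R := ℂ) (twistedAntipode α c) = counit (R := ℂ) c := fun c => by
    simp [twistedAntipode, counit_admissible hα]
  -- The two counit laws for `a`, evaluated under `L` and under `L ∘ α`.
  have e1 : ∀ f : A →ₗ[ℂ] ℂ, ∑ i ∈ s, counit (R := ℂ) (x i) * f (y i) = f a := fun f => by
    simpa using congrArg f (sum_counit_smul r)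
  have e2 : ∀ f : A →ₗ[ℂ] ℂ, ∑ i ∈ s, f (x i) * counit (R := ℂ) (y i) = f a := fun f => by
    simpa [mul_comm] using congrArg f (sum_counit_smul_left r)
  have a1 : ∑ i ∈ s, L (twistedAntipode α (x i) * α (y i)) = 0 := by
    have h := congrArg L (HopfAlgebra.sum_antipode_mul_eq_smul (admissibleRepr hα r))
    rw [map_sum, map_smul, hL.map_one, smul_zero] at h
    exact h
  have a2 : ∑ i ∈ s, L (α (x i) * twistedAntipode α (y i)) = 0 := by
    have h := congrArg L (HopfAlgebra.sum_mul_antipode_eq_smul (admissibleRepr hα r))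
    rw [map_sum, map_smul, hL.map_one, smul_zero] at h
    exact h
  have f1 := e1 (L ∘ₗ α)
  have f2 := e2 (L ∘ₗ α)
  simp only [LinearMap.comp_apply] at f1 f2
  simp only [hcob _ _, Finset.sum_add_distrib, hSε, hinv, counit_admissible hα] at a1 a2
  rw [f1, e2 L] at a1
  rw [e1 L, f2] at a2
  rw [map_add]
  exact ⟨by linear_combination a1, by linear_combination a2⟩
end

section
/- (Main theorem.) Let A be a Hopf *-algebra over ℂ, α : A → A an admissible bijection with α-twisted antipode S_α = S∘α, and η : A → D an α-real nondegenerate cocycle for a *-representation π on a complex inner product space D. Then there exists an S_α-invariant generating functional L : A → ℂ such that η yields the coboundary of L, and L is determined by the formula: for every a ∈ A with Δ(a) = ∑_{i∈s} xᵢ ⊗ yᵢ (a finite sum), L(a + α(a)) = −∑_{i∈s} ⟨η((S_α(xᵢ))*), η(α(yᵢ))⟩. -/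
/-!
The proof replaces the cocycle `η` by the bilinear form `ψ(a, b) = ⟪η(a*), η(b)⟫`, which is a
normalized Hochschild 2-cocycle with trivial (counit) coefficients; `α`-reality says that
`ψ(a, b) = ψ(S_α b, S_α a)`. The task is to write `ψ` as the coboundary of a functional.

For every 2-cocycle `ψ`, set `θ(a) = -∑ ψ(S a₁, a₂)`. The cocycle identity alone gives
`θ(ab) = ε(a) θ(b) + θ(a) ε(b) + ψ(a, b) + ψ(S b, S a)` (`theta_mul`), and if `ψ` is the coboundary
of `L` then `θ = L + L ∘ S` (`add_antipode_of_coboundary`). An `S_α`-invariant `L` must therefore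
satisfy `L ∘ (id + α) = θ ∘ α`, and bijectivity of `id + α` makes this a definition of `L`.

* *Coboundary.* The identity `L(ab) = ε(a) L(b) + L(a) ε(b) + ψ(a, b)` is linear in `a ⊗ b`, so by
  surjectivity of `id ⊗ id + α ⊗ α` it suffices to check it on `a ⊗ b + α a ⊗ α b`, where it is
  `theta_mul` at `(α a, α b)` combined with `α`-reality.
* *Invariance.* `L + L ∘ S = θ` gives `L ∘ S ∘ α = θ ∘ α - L ∘ α = L`.
* *Hermitianity.* `L'(a) = conj (L(a*))` has the same coboundary as `L`, and it is again
  `S_α`-invariant: this uses `S(S(a*)*) = a`, `α(α(a*)*) = a` and the fact that `α` commutes with `S`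
  (uniqueness of convolution inverses). Invariance and coboundary force
  `L' ∘ (id + α) = θ ∘ α`, hence `L' = L`.
* *Positivity.* For `ε(a) = 0` the coboundary identity reads `L(a* a) = ‖η(a)‖²`.
-/


open scoped TensorProduct ComplexConjugate ComplexOrder InnerProductSpace
open Coalgebra

universe u

variable {A : Type u} [Ring A] [HopfAlgebra ℂ A] [StarRing A] [StarModule ℂ A]

variable {D : Type u} [NormedAddCommGroup D] [InnerProductSpace ℂ D]

/-! ### Hochschild 2-cocycles on Hopf algebras -/

section TwoCocycle

open HopfAlgebra

variable {H : Type*} [Ring H] [HopfAlgebra ℂ H]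

/-- A normalized Hochschild 2-cocycle on a Hopf algebra, with coefficients in `ℂ` on which both
sides act through the counit. -/
structure IsTwoCocycle (ψ : H →ₗ[ℂ] H →ₗ[ℂ] ℂ) : Prop where
  one_left : ∀ x, ψ 1 x = 0
  one_right : ∀ x, ψ x 1 = 0
  cocycle : ∀ x y z, ψ (x * y) z + counit (R := ℂ) z * ψ x y =
    ψ x (y * z) + counit (R := ℂ) x * ψ y z

/-- The functional `θ(a) = -∑ ψ(S a₁, a₂)`. -/
noncomputable def theta (ψ : H →ₗ[ℂ] H →ₗ[ℂ] ℂ) : H →ₗ[ℂ] ℂ :=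
  -(TensorProduct.lift (ψ ∘ₗ antipode (R := ℂ)) ∘ₗ comul)

lemma theta_repr (ψ : H →ₗ[ℂ] H →ₗ[ℂ] ℂ) {a : H} {ι : Type*} (r : Coalgebra.Repr ℂ a ι) :
    theta ψ a = -∑ i ∈ r.index, ψ (antipode (R := ℂ) (r.left i)) (r.right i) := by
  simp [theta, ← r.eq, map_sum]

lemma sum_counit_mul_map (f : H →ₗ[ℂ] ℂ) {a : H} {ι : Type*} (r : Coalgebra.Repr ℂ a ι) :
    ∑ i ∈ r.index, counit (R := ℂ) (r.left i) * f (r.right i) = f a := by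
  conv_rhs => rw [← sum_counit_smul r]
  simp

lemma sum_map_mul_counit (f : H →ₗ[ℂ] ℂ) {a : H} {ι : Type*} (r : Coalgebra.Repr ℂ a ι) :
    ∑ i ∈ r.index, f (r.left i) * counit (R := ℂ) (r.right i) = f a := by
  have h := congrArg (TensorProduct.lift ((LinearMap.mul ℂ ℂ) ∘ₗ f)) (sum_tmul_counit_eq r)
  simpa [map_sum, -sum_tmul_counit_eq] using h

/-- The part of `theta_mul` in which the antipode axiom is applied to `a` only:
`∑ ψ(S a₁, a₂ b) = ε(b) ∑ ψ(S a₁, a₂) - ψ(a, b)`. -/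
lemma IsTwoCocycle.sum_antipode_mul {ψ : H →ₗ[ℂ] H →ₗ[ℂ] ℂ} (hψ : IsTwoCocycle ψ) (a b : H)
    {ι : Type*} (r : Coalgebra.Repr ℂ a ι) :
    ∑ i ∈ r.index, ψ (antipode (R := ℂ) (r.left i)) (r.right i * b) =
      -(counit (R := ℂ) b * theta ψ a) - ψ a b := by
  have h1 : ∀ i, ψ (antipode (R := ℂ) (r.left i)) (r.right i * b) =
      ψ.flip b (antipode (R := ℂ) (r.left i) * r.right i)
      + counit (R := ℂ) b * ψ (antipode (R := ℂ) (r.left i)) (r.right i)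
      - counit (R := ℂ) (r.left i) * ψ.flip b (r.right i) := by
    intro i
    have := hψ.cocycle (antipode (R := ℂ) (r.left i)) (r.right i) b
    rw [counit_antipode] at this
    simp only [LinearMap.flip_apply]
    linear_combination -this
  simp_rw [h1]
  rw [Finset.sum_sub_distrib, Finset.sum_add_distrib, ← map_sum, sum_antipode_mul_eq_smul r,
    ← Finset.mul_sum, sum_counit_mul_map, theta_repr ψ r]
  simp [hψ.one_left]

/-- The coboundary of `θ` is `ψ` symmetrized by the antipode. -/
lemma IsTwoCocycle.theta_mul {ψ : H →ₗ[ℂ] H →ₗ[ℂ] ℂ} (hψ : IsTwoCocycle ψ) (a b : H) :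
    theta ψ (a * b) = counit (R := ℂ) a * theta ψ b + theta ψ a * counit (R := ℂ) b
      + ψ a b + ψ (antipode (R := ℂ) b) (antipode (R := ℂ) a) := by
  let r := ℛ ℂ a
  let s := ℛ ℂ b
  have h0 : theta ψ (a * b) = -∑ i ∈ r.index, ∑ j ∈ s.index,
      ψ (antipode (R := ℂ) (s.left j) * antipode (R := ℂ) (r.left i))
        (r.right i * s.right j) := by
    have hc : comul (R := ℂ) (a * b) = ∑ i ∈ r.index, ∑ j ∈ s.index,
        (r.left i * s.left j) ⊗ₜ[ℂ] (r.right i * s.right j) := by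
      rw [Bialgebra.comul_mul, ← r.eq, ← s.eq, Finset.sum_mul_sum]
      simp
    simp [theta, hc, map_sum, antipode_mul_antidistrib]
  have h1 : ∀ i j, ψ (antipode (R := ℂ) (s.left j) * antipode (R := ℂ) (r.left i))
        (r.right i * s.right j) =
      ψ (antipode (R := ℂ) (s.left j)) (antipode (R := ℂ) (r.left i) * r.right i * s.right j)
      + counit (R := ℂ) (s.left j) * ψ (antipode (R := ℂ) (r.left i)) (r.right i * s.right j)
      - counit (R := ℂ) (r.right i) * (counit (R := ℂ) (s.right j) *
        ψ (antipode (R := ℂ) (s.left j)) (antipode (R := ℂ) (r.left i))) := by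
    intro i j
    have := hψ.cocycle (antipode (R := ℂ) (s.left j)) (antipode (R := ℂ) (r.left i))
      (r.right i * s.right j)
    rw [counit_antipode, Bialgebra.counit_mul, ← mul_assoc] at this
    linear_combination this
  have e1 : ∑ i ∈ r.index, ∑ j ∈ s.index,
      ψ (antipode (R := ℂ) (s.left j)) (antipode (R := ℂ) (r.left i) * r.right i * s.right j)
      = -(counit (R := ℂ) a * theta ψ b) := by
    rw [Finset.sum_comm, theta_repr ψ s]
    simp_rw [← map_sum, ← Finset.sum_mul, sum_antipode_mul_eq_smul r]
    simp [Finset.mul_sum]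
  have e2 : ∑ i ∈ r.index, ∑ j ∈ s.index,
      counit (R := ℂ) (s.left j) * ψ (antipode (R := ℂ) (r.left i)) (r.right i * s.right j)
      = -(counit (R := ℂ) b * theta ψ a) - ψ a b := by
    rw [← hψ.sum_antipode_mul a b r]
    refine Finset.sum_congr rfl fun i _ => ?_
    exact sum_counit_mul_map
      (ψ (antipode (R := ℂ) (r.left i)) ∘ₗ LinearMap.mulLeft ℂ (r.right i)) s
  have e3 : ∑ i ∈ r.index, ∑ j ∈ s.index, counit (R := ℂ) (r.right i) *
      (counit (R := ℂ) (s.right j) *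
        ψ (antipode (R := ℂ) (s.left j)) (antipode (R := ℂ) (r.left i)))
      = ψ (antipode (R := ℂ) b) (antipode (R := ℂ) a) := by
    have hs : ∀ x, ∑ j ∈ s.index, counit (R := ℂ) (s.right j) *
        ψ (antipode (R := ℂ) (s.left j)) x = ψ (antipode (R := ℂ) b) x := fun x => by
      refine Eq.trans ?_ (sum_map_mul_counit (ψ.flip x ∘ₗ antipode (R := ℂ)) s)
      exact Finset.sum_congr rfl fun j _ => mul_comm _ _
    simp_rw [← Finset.mul_sum, hs]
    refine Eq.trans ?_ (sum_map_mul_counit (ψ (antipode (R := ℂ) b) ∘ₗ antipode (R := ℂ)) r)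
    exact Finset.sum_congr rfl fun j _ => mul_comm _ _
  rw [h0]
  simp_rw [h1, Finset.sum_sub_distrib, Finset.sum_add_distrib]
  rw [e1, e2, e3]
  ring

/-- If `ψ` is the coboundary of `L`, then `L + L ∘ S = θ`. -/
lemma add_antipode_of_coboundary {ψ : H →ₗ[ℂ] H →ₗ[ℂ] ℂ} {L : H →ₗ[ℂ] ℂ} (h1 : L 1 = 0)
    (hL : ∀ a b, L (a * b) = counit (R := ℂ) a * L b + L a * counit (R := ℂ) b + ψ a b) (a : H) :
    L a + L (antipode (R := ℂ) a) = theta ψ a := by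
  let r := ℛ ℂ a
  have h : ∀ i, ψ (antipode (R := ℂ) (r.left i)) (r.right i) =
      L (antipode (R := ℂ) (r.left i) * r.right i)
      - counit (R := ℂ) (r.left i) * L (r.right i)
      - (L ∘ₗ antipode (R := ℂ)) (r.left i) * counit (R := ℂ) (r.right i) := by
    intro i
    rw [hL, counit_antipode, LinearMap.comp_apply]
    ring
  rw [theta_repr ψ r]
  simp_rw [h]
  rw [Finset.sum_sub_distrib, Finset.sum_sub_distrib, ← map_sum, sum_antipode_mul_eq_smul r,
    sum_counit_mul_map, sum_map_mul_counit]
  simp [h1, add_comm]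

/-- The representation of `Δ (f a)` obtained by applying a comultiplicative map `f` to one of
`Δ a`. -/
def mapRepr (f : H →ₗ[ℂ] H)
    (hf : ∀ a, TensorProduct.map f f (comul (R := ℂ) a) = comul (R := ℂ) (f a))
    {a : H} {ι : Type*} (r : Coalgebra.Repr ℂ a ι) : Coalgebra.Repr ℂ (f a) ι where
  index := r.index
  left i := f (r.left i)
  right i := f (r.right i)
  eq := by rw [← hf, ← r.eq]; simp

/-- An injective comultiplicative map preserves the counit: `ε ∘ f` is a left counit because
`f ((ε ∘ f ⊗ id) Δ a) = (ε ⊗ id) Δ (f a) = f a`. -/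
lemma counit_of_comul_comp (f : H →ₗ[ℂ] H)
    (hf : ∀ a, TensorProduct.map f f (comul (R := ℂ) a) = comul (R := ℂ) (f a))
    (hinj : Function.Injective f) (a : H) : counit (R := ℂ) (f a) = counit (R := ℂ) a := by
  let r := ℛ ℂ a
  have h1 : ∑ i ∈ r.index, counit (R := ℂ) (f (r.left i)) • r.right i = a := by
    apply hinj
    have := sum_counit_smul (mapRepr f hf r)
    simpa [mapRepr, map_sum] using this
  have h2 := sum_map_mul_counit (counit (R := ℂ) ∘ₗ f) r
  have h3 := congrArg (counit (R := ℂ)) h1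
  simp only [map_sum, map_smul, smul_eq_mul] at h3
  exact h2.symm.trans h3

/-- A bialgebra endomorphism commutes with the antipode: `S ∘ f` and `f ∘ S` are respectively a
left and a right convolution inverse of `f`. -/
lemma antipode_map_comm (f : H →ₗ[ℂ] H) (hone : f 1 = 1) (hmul : ∀ a b, f (a * b) = f a * f b)
    (hf : ∀ a, TensorProduct.map f f (comul (R := ℂ) a) = comul (R := ℂ) (f a))
    (hε : ∀ a, counit (R := ℂ) (f a) = counit (R := ℂ) a) (a : H) :
    antipode (R := ℂ) (f a) = f (antipode (R := ℂ) a) := by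
  have key : WithConv.toConv (antipode (R := ℂ) ∘ₗ f) =
      WithConv.toConv (f ∘ₗ antipode (R := ℂ)) := by
    apply left_inv_eq_right_inv (a := WithConv.toConv f)
    · ext c
      rw [(ℛ ℂ c).convMul_apply]
      have := sum_antipode_mul_eq_algebraMap_counit (mapRepr f hf (ℛ ℂ c))
      rw [hε] at this
      simpa [mapRepr] using this
    · ext c
      rw [(ℛ ℂ c).convMul_apply]
      have := congrArg f (sum_mul_antipode_eq_smul (ℛ ℂ c))
      simpa [map_sum, hmul, hone, Algebra.algebraMap_eq_smul_one] using this
  exact LinearMap.congr_fun (WithConv.toConv_injective key) a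

end TwoCocycle

/-! ### The 2-cocycle attached to `η` -/

section StarForm

/-- The bilinear form `ψ(a, b) = ⟪η(a*), η(b)⟫`. -/
noncomputable def starForm (η : A →ₗ[ℂ] D) : A →ₗ[ℂ] A →ₗ[ℂ] ℂ :=
  LinearMap.mk₂ ℂ (fun a b => ⟪η (star a), η b⟫_ℂ)
    (fun a a' b => by simp)
    (fun c a b => by simp [star_smul, mul_comm])
    (fun a b b' => by simp)
    (fun c a b => by simp)

lemma starForm_apply (η : A →ₗ[ℂ] D) (a b : A) : starForm η a b = ⟪η (star a), η b⟫_ℂ := rfl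

set_option linter.unusedSectionVars false in
lemma IsCocycle.map_one {π : A →ₐ[ℂ] Module.End ℂ D} {η : A →ₗ[ℂ] D} (hη : IsCocycle π η) :
    η 1 = 0 := by
  have := hη 1 1
  simpa using this

lemma isTwoCocycle_starForm (hA : IsHopfStar A) {π : A →ₐ[ℂ] Module.End ℂ D} {η : A →ₗ[ℂ] D}
    (hπ : IsStarRep π) (hη : IsCocycle π η) : IsTwoCocycle (starForm η) where
  one_left x := by simp [starForm_apply, hη.map_one]
  one_right x := by simp [starForm_apply, hη.map_one]
  cocycle x y z := by
    simp only [starForm_apply, star_mul]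
    rw [hη (star y) (star x), hη y z, inner_add_left, inner_add_right, inner_smul_left,
      inner_smul_right, hπ, hA.2.1, Complex.conj_conj]
    ring

end StarForm

/-! ### The generating functional -/

/-- Main theorem: every `α`-real nondegenerate cocycle yields the coboundary of an
`S_α`-invariant generating functional `L`, determined by
`L(a + α(a)) = −∑ᵢ ⟨η((S_α(xᵢ))*), η(α(yᵢ))⟩` whenever `Δ(a) = ∑ᵢ xᵢ ⊗ yᵢ`. -/
theorem alphaReal_cocycle_gives_genFunctional (hA : IsHopfStar A)
    (α : A →ₗ[ℂ] A) (hα : IsAdmissible α)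
    (π : A →ₐ[ℂ] Module.End ℂ D) (η : A →ₗ[ℂ] D)
    (hπ : IsStarRep π) (hη : IsCocycle π η)
    (hnd : Dense (Set.range η)) (hreal : IsAlphaReal α η) :
    ∃ L : A →ₗ[ℂ] ℂ, IsGenFunctional L ∧
      (∀ a : A, L (twistedAntipode α a) = L a) ∧
      YieldsCoboundary η L ∧
      ∀ (a : A) (ι : Type u) (s : Finset ι) (x y : ι → A),
        comul (R := ℂ) a = ∑ i ∈ s, x i ⊗ₜ[ℂ] y i →
        L (a + α a) =
          -∑ i ∈ s, ⟪η (star (twistedAntipode α (x i))), η (α (y i))⟫_ℂ := by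
  obtain ⟨-, hεstar, hSstar⟩ := id hA
  have hinj : Function.Injective α := by
    have h : Function.LeftInverse (fun a => star (α (star a))) α := fun a => by
      have := hα.star_cond (star a)
      rw [star_star] at this
      simp [this]
    exact h.injective
  have hε := counit_of_comul_comp α hα.comul_comp hinj
  have hcomm := antipode_map_comm α hα.map_one hα.map_mul hα.comul_comp hε
  set ψ := starForm η with hψdef
  have hψ : IsTwoCocycle ψ := isTwoCocycle_starForm hA hπ hη
  have hψreal : ∀ a b, ψ a b =
      ψ (HopfAlgebra.antipode (R := ℂ) (α b)) (HopfAlgebra.antipode (R := ℂ) (α a)) := by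
    intro a b
    have := hreal (star a) b
    rwa [star_star] at this
  let e := LinearEquiv.ofBijective _ hα.bij_add
  let L : A →ₗ[ℂ] ℂ := theta ψ ∘ₗ α ∘ₗ e.symm.toLinearMap
  have hL : ∀ a, L (a + α a) = theta ψ (α a) := fun a => by
    have : e.symm (a + α a) = a := (LinearEquiv.symm_apply_eq e).2 rfl
    simp [L, this]
  have hcob : ∀ a b, L (a * b) =
      counit (R := ℂ) a * L b + L a * counit (R := ℂ) b + ψ a b := by
    -- Both sides as functionals on `A ⊗ A`, compared after composing with `id ⊗ id + α ⊗ α`.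
    let F : A ⊗[ℂ] A →ₗ[ℂ] ℂ := L ∘ₗ LinearMap.mul' ℂ A
    let G : A ⊗[ℂ] A →ₗ[ℂ] ℂ :=
      LinearMap.mul' ℂ ℂ ∘ₗ TensorProduct.map (counit (R := ℂ)) L
      + LinearMap.mul' ℂ ℂ ∘ₗ TensorProduct.map L (counit (R := ℂ)) + TensorProduct.lift ψ
    have hFG : F ∘ₗ (LinearMap.id + TensorProduct.map α α) =
        G ∘ₗ (LinearMap.id + TensorProduct.map α α) := by
      ext a b
      have h1 := hL (a * b)
      have h2 := hL a
      have h3 := hL b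
      have h4 := hψ.theta_mul (α a) (α b)
      rw [← hψreal a b, hε, hε, ← hα.map_mul] at h4
      rw [map_add] at h1 h2 h3
      simp only [F, G, TensorProduct.AlgebraTensorModule.curry_apply, TensorProduct.curry_apply,
        LinearMap.coe_restrictScalars, LinearMap.comp_apply, LinearMap.add_apply,
        LinearMap.id_apply, TensorProduct.map_tmul, map_add, LinearMap.mul'_apply,
        TensorProduct.lift.tmul, hε, ← hα.map_mul]
      linear_combination h1 + h4 - counit (R := ℂ) a * h3 - counit (R := ℂ) b * h2
    intro a b
    obtain ⟨t, ht⟩ := hα.bij_tensor.2 (a ⊗ₜ[ℂ] b)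
    have : F (a ⊗ₜ[ℂ] b) = G (a ⊗ₜ[ℂ] b) := by
      rw [← ht]
      exact LinearMap.congr_fun hFG t
    exact this
  have hL1 : L 1 = 0 := by
    have := hcob 1 1
    simpa [hψ.one_left] using this
  have hinv : ∀ a, L (twistedAntipode α a) = L a := fun a => by
    have h1 := add_antipode_of_coboundary hL1 hcob (α a)
    have h2 := hL a
    rw [map_add] at h2
    change L (HopfAlgebra.antipode (R := ℂ) (α a)) = L a
    linear_combination h1 - h2
  have hherm : ∀ a, conj (L (star a)) = L a := by
    let L' : A →ₗ[ℂ] ℂ :=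
      { toFun := fun a => conj (L (star a))
        map_add' := fun a b => by simp
        map_smul' := fun c a => by simp [star_smul] }
    have hL' : ∀ a, L' a = conj (L (star a)) := fun _ => rfl
    have hcob' : ∀ a b, L' (a * b) =
        counit (R := ℂ) a * L' b + L' a * counit (R := ℂ) b + ψ a b := fun a b => by
      simp only [hL', star_mul, hcob, hεstar, map_add, map_mul, Complex.conj_conj, hψdef,
        starForm_apply, star_star, inner_conj_symm]
      ring
    have hL'1 : L' 1 = 0 := by simp [hL', hL1]
    have hinv' : ∀ a, L' (HopfAlgebra.antipode (R := ℂ) (α a)) = L' a := fun a => by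
      -- With `b = (S (α a))*` the star axioms give `S (α b) = α (S b) = a*`.
      have h1 := hSstar (star (α a))
      rw [star_star] at h1
      have h2 := hα.star_cond (star a)
      rw [star_star] at h2
      have h3 := hinv (star (HopfAlgebra.antipode (R := ℂ) (α a)))
      have h4 : twistedAntipode α (star (HopfAlgebra.antipode (R := ℂ) (α a))) = star a := by
        rw [twistedAntipode, LinearMap.comp_apply, hcomm, h1, h2]
      rw [hL', hL', ← h3, h4]
    have heq : L' ∘ₗ (LinearMap.id + α) = L ∘ₗ (LinearMap.id + α) := by
      ext a
      have h1 := add_antipode_of_coboundary hL'1 hcob' (α a)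
      rw [hinv' a] at h1
      have h2 := hL a
      simp only [LinearMap.comp_apply, LinearMap.add_apply, LinearMap.id_apply, map_add] at h2 ⊢
      linear_combination h1 - h2
    intro a
    obtain ⟨c, hc⟩ := hα.bij_add.2 a
    have := LinearMap.congr_fun heq c
    rwa [LinearMap.comp_apply, LinearMap.comp_apply, hc] at this
  refine ⟨L, ⟨hL1, fun a => ?_, fun a ha => ?_⟩, hinv, hcob, ?_⟩
  · rw [← hherm a, Complex.conj_conj]
  · rw [hcob, hεstar, ha, hψdef, starForm_apply, star_star, inner_self_eq_norm_sq_to_K]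
    simp only [map_zero, zero_mul, mul_zero, zero_add]
    simp
  · intro a ι s x y h
    rw [hL, theta_repr ψ (mapRepr α hα.comul_comp ⟨s, x, y, h.symm⟩)]
    rfl
end
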